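/- Suppose $\{v_n\}$ and $\{w_m\}$ are $1/2$-uniformly distributed sequences in $[0,1]^d$, $d \geq 2$, and fix $\frac{1}{100} \leq t < d$. Then for every $\epsilon > 0$ there exists $C_\epsilon > 0$ such that $\#\{(n,m) \in [1,N]^2 : v_n \cdot w_m = t\} \leq C_\epsilon N^{3/2 + \epsilon}$ for all $N$. -/

import Mathlib

open Finset

/-- Euclidean norm of an integer vector `k ∈ ℤ^d`. -/
noncomputable def intNorm {d : ℕ} (k : Fin d → ℤ) : ℝ :=
  Real.sqrt (∑ i, ((k i : ℝ)) ^ 2)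

/-- The Euclidean dot product on `[0,1]^d ⊂ ℝ^d`. -/
def dotP {d : ℕ} (x y : Fin d → ℝ) : ℝ := ∑ i, x i * y i

/-- A sequence `{v_n}` in `[0,1]^d` is `γ`-uniformly distributed. -/
def IsGammaUD {d : ℕ} (γ : ℝ) (v : ℕ → Fin d → ℝ) : Prop :=
  ∀ ε : ℝ, 0 < ε → ∃ C : ℝ, 0 < C ∧ ∀ k : Fin d → ℤ, k ≠ 0 → ∀ N : ℕ, 1 ≤ N →
    ‖(N : ℂ)⁻¹ * ∑ n ∈ Finset.range N,
        Complex.exp (2 * Real.pi * Complex.I * (∑ i, (k i : ℝ) * v n i))‖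
      ≤ C * intNorm k ^ ε * (N : ℝ) ^ (-γ)

/-- The additive character `x ↦ exp (2πix)` of `ℝ`. -/
noncomputable def expTwoPi (x : ℝ) : ℂ := Complex.exp (2 * Real.pi * Complex.I * x)

lemma expTwoPi_add (x y : ℝ) : expTwoPi (x + y) = expTwoPi x * expTwoPi y := by
  simp only [expTwoPi, ← Complex.exp_add]
  push_cast
  ring_nf

lemma norm_expTwoPi (x : ℝ) : ‖expTwoPi x‖ = 1 := by
  rw [expTwoPi, Complex.norm_exp]
  simp

lemma expTwoPi_intCast (k : ℤ) : expTwoPi k = 1 := by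
  rw [expTwoPi, Complex.exp_eq_one_iff]
  exact ⟨k, by push_cast; ring⟩

lemma expTwoPi_sum {ι : Type*} (s : Finset ι) (f : ι → ℝ) :
    expTwoPi (∑ i ∈ s, f i) = ∏ i ∈ s, expTwoPi (f i) := by
  simp only [expTwoPi, ← Complex.exp_sum, Complex.ofReal_sum, Finset.mul_sum]

lemma continuous_expTwoPi : Continuous expTwoPi := by
  unfold expTwoPi
  fun_prop

/-- The modulated bump `sin² (πy) e(θy)`, vanishing to second order at `0` and `1`. -/
noncomputable def bumpExp (θ y : ℝ) : ℂ := (Real.sin (Real.pi * y) ^ 2 : ℝ) * expTwoPi (θ * y)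

lemma continuous_bumpExp (θ : ℝ) : Continuous (bumpExp θ) := by
  have := continuous_expTwoPi
  unfold bumpExp
  fun_prop

lemma norm_bumpExp_le (θ y : ℝ) : ‖bumpExp θ y‖ ≤ 1 := by
  rw [bumpExp, norm_mul, norm_expTwoPi, mul_one, Complex.norm_real, Real.norm_eq_abs, abs_pow,
    sq_abs]
  exact Real.sin_sq_le_one _

lemma integral_bumpExp_eq {u : ℝ} (hu : u ≠ 0) :
    ∫ y in (0 : ℝ)..1, bumpExp u y =
      ∫ y in (0 : ℝ)..1, (-(Real.cos (2 * (Real.pi * y)) / (2 * u ^ 2) : ℝ) : ℂ) *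
        expTwoPi (u * y) := by
  have hc : Continuous fun y : ℝ ↦ (-(Real.cos (2 * (Real.pi * y)) / (2 * u ^ 2) : ℝ) : ℂ) *
      expTwoPi (u * y) := by
    have := continuous_expTwoPi
    fun_prop
  rw [← sub_eq_zero, ← intervalIntegral.integral_sub
    ((continuous_bumpExp u).intervalIntegrable _ _) (hc.intervalIntegrable _ _)]
  have hpi : (Real.pi : ℂ) ≠ 0 := by exact_mod_cast Real.pi_ne_zero
  have hu' : (u : ℂ) ≠ 0 := by exact_mod_cast hu
  let H : ℝ → ℂ := fun y ↦ ((Real.sin (Real.pi * y) ^ 2 : ℝ) / (2 * Real.pi * Complex.I * u) -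
    (2 * Real.pi * (Real.sin (Real.pi * y) * Real.cos (Real.pi * y)) : ℝ) /
      (2 * Real.pi * Complex.I * u) ^ 2) * expTwoPi (u * y)
  have hH : ∀ y ∈ Set.uIcc (0 : ℝ) 1, HasDerivAt H (bumpExp u y -
      (-(Real.cos (2 * (Real.pi * y)) / (2 * u ^ 2) : ℝ) : ℂ) * expTwoPi (u * y)) y := by
    intro y _
    have hl : HasDerivAt (fun y : ℝ ↦ Real.pi * y) Real.pi y := by
      simpa using (hasDerivAt_id y).const_mul Real.pi
    have h1 := ((hl.sin.pow 2).ofReal_comp.div_const (2 * Real.pi * Complex.I * u))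
    have h2 := (((hl.sin.mul hl.cos).const_mul (2 * Real.pi)).ofReal_comp.div_const
      ((2 * Real.pi * Complex.I * u) ^ 2))
    have h3 : HasDerivAt (fun y : ℝ ↦ expTwoPi (u * y))
        (expTwoPi (u * y) * (2 * Real.pi * Complex.I * u)) y := by
      have : HasDerivAt (fun y : ℝ ↦ (2 * Real.pi * Complex.I * (u * y : ℝ) : ℂ))
          (2 * Real.pi * Complex.I * u) y := by
        have := ((hasDerivAt_id y).const_mul u).ofReal_comp.const_mul (2 * Real.pi * Complex.I)
        simpa using this
      exact this.cexp
    refine HasDerivAt.congr_deriv (f := H) ((h1.sub h2).mul h3) ?_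
    simp only [bumpExp, Real.cos_two_mul, Pi.sub_apply, Pi.mul_apply, Pi.pow_apply]
    push_cast
    have hsq : Complex.cos (Real.pi * y) ^ 2 = 1 - Complex.sin (Real.pi * y) ^ 2 := by
      linear_combination Complex.sin_sq_add_cos_sq (Real.pi * y : ℂ)
    field_simp
    have hI := Complex.I_sq
    grind
  rw [intervalIntegral.integral_eq_sub_of_hasDerivAt hH
    (((continuous_bumpExp u).sub hc).intervalIntegrable _ _)]
  simp [H]

lemma norm_integral_bumpExp_le (u : ℝ) :
    ‖∫ y in (0 : ℝ)..1, bumpExp u y‖ ≤ 2 / (1 + u ^ 2) := by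
  have h1 : ‖∫ y in (0 : ℝ)..1, bumpExp u y‖ ≤ 1 := by
    simpa using intervalIntegral.norm_integral_le_of_norm_le_const (a := (0 : ℝ)) (b := 1)
      (fun y _ ↦ norm_bumpExp_le u y)
  rw [le_div_iff₀ (by positivity)]
  rcases eq_or_ne u 0 with rfl | hu
  · linarith
  have h2 : ‖∫ y in (0 : ℝ)..1, bumpExp u y‖ ≤ 1 / (2 * u ^ 2) := by
    rw [integral_bumpExp_eq hu]
    refine (intervalIntegral.norm_integral_le_of_norm_le_const (C := 1 / (2 * u ^ 2))
      fun y _ ↦ ?_).trans (by simp)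
    rw [norm_mul, norm_expTwoPi, mul_one, norm_neg, Complex.norm_real, Real.norm_eq_abs, abs_div,
      abs_of_pos (a := 2 * u ^ 2) (by positivity)]
    gcongr
    exact Real.abs_cos_le_one _
  rw [le_div_iff₀ (by positivity)] at h2
  linarith

lemma fourierCoeff_liftIco_bumpExp (θ : ℝ) (k : ℤ) :
    fourierCoeff (AddCircle.liftIco (1 : ℝ) 0 (bumpExp θ)) k =
      ∫ y in (0 : ℝ)..1, bumpExp (θ - k) y := by
  rw [fourierCoeff_liftIco_eq, fourierCoeffOn_eq_integral]
  simp only [zero_add, sub_zero, div_one, one_smul]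
  refine intervalIntegral.integral_congr fun y _ ↦ ?_
  simp only [fourier_coe_apply, smul_eq_mul, bumpExp, expTwoPi]
  rw [mul_left_comm, ← Complex.exp_add]
  push_cast
  ring_nf

lemma summable_one_add_abs_int_rpow {b : ℝ} (hb : 1 < b) :
    Summable fun j : ℤ ↦ (1 + |(j : ℝ)|) ^ (-b) := by
  have h : Summable fun n : ℕ ↦ (1 + (n : ℝ)) ^ (-b) := by
    have := (summable_nat_add_iff 1).mpr (Real.summable_nat_rpow.mpr (by linarith : -b < -1))
    simpa [add_comm] using this
  apply Summable.of_nat_of_neg <;> simpa using h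

lemma exists_bumpExp_fourier_series {ε : ℝ} (hε : 0 < ε) (hε' : ε ≤ 1 / 2) :
    ∃ C : ℝ, 0 < C ∧ ∀ θ : ℝ, ∃ c : ℤ → ℂ,
      Summable (fun k : ℤ ↦ ‖c k‖ * (1 + |(k : ℝ)|) ^ ε) ∧
      ∑' k : ℤ, ‖c k‖ * (1 + |(k : ℝ)|) ^ ε ≤ C * (1 + |θ|) ^ ε ∧
      ∀ y ∈ Set.Ico (0 : ℝ) 1, HasSum (fun k : ℤ ↦ c k * expTwoPi (k * y)) (bumpExp θ y) := by
  have hS := summable_one_add_abs_int_rpow (b := 2 - ε) (by linarith)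
  refine ⟨12 * 2 ^ ε * (∑' j : ℤ, (1 + |(j : ℝ)|) ^ (-(2 - ε)) + 1), ?_, fun θ ↦ ?_⟩
  · positivity
  let c : ℤ → ℂ := fun k ↦ ∫ y in (0 : ℝ)..1, bumpExp (θ - k) y
  have hbound (j : ℤ) : ‖c (j + ⌊θ⌋)‖ * (1 + |((j + ⌊θ⌋ : ℤ) : ℝ)|) ^ ε ≤
      12 * 2 ^ ε * (1 + |θ|) ^ ε * (1 + |(j : ℝ)|) ^ (-(2 - ε)) := by
    have h0 := Int.floor_le θ
    have h1 := Int.lt_floor_add_one θ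
    have hc : ‖c (j + ⌊θ⌋)‖ ≤ 12 * (1 + |(j : ℝ)|) ^ (-2 : ℝ) := by
      refine (norm_integral_bumpExp_le _).trans ?_
      rw [Real.rpow_neg (by positivity), Real.rpow_two, ← div_eq_mul_inv,
        div_le_div_iff₀ (by positivity) (by positivity)]
      push_cast
      have hj : |(j : ℝ)| ≤ |θ - (j + ⌊θ⌋)| + 1 := by
        rw [abs_le]
        constructor <;> linarith [neg_abs_le (θ - (j + ⌊θ⌋)), le_abs_self (θ - (j + ⌊θ⌋))]
      nlinarith [sq_abs (θ - (j + ⌊θ⌋)), sq_nonneg (|θ - (j + ⌊θ⌋)| - 2 / 5), abs_nonneg (j : ℝ)]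
    have hk : 1 + |((j + ⌊θ⌋ : ℤ) : ℝ)| ≤ 2 * (1 + |θ|) * (1 + |(j : ℝ)|) := by
      have hf : |(⌊θ⌋ : ℝ)| ≤ |θ| + 1 := by
        rw [abs_le]
        constructor <;> linarith [neg_abs_le θ, le_abs_self θ]
      push_cast
      nlinarith [abs_add_le (j : ℝ) ⌊θ⌋, abs_nonneg (j : ℝ), abs_nonneg θ,
        mul_nonneg (abs_nonneg (j : ℝ)) (abs_nonneg θ)]
    calc ‖c (j + ⌊θ⌋)‖ * (1 + |((j + ⌊θ⌋ : ℤ) : ℝ)|) ^ ε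
        ≤ (12 * (1 + |(j : ℝ)|) ^ (-2 : ℝ)) * (2 * (1 + |θ|) * (1 + |(j : ℝ)|)) ^ ε := by
          gcongr
      _ = _ := by
          rw [Real.mul_rpow (by positivity) (by positivity),
            Real.mul_rpow (by positivity) (by positivity),
            show -(2 - ε) = -2 + ε by ring, Real.rpow_add (by positivity)]
          ring
  have hS' := hS.mul_left (12 * 2 ^ ε * (1 + |θ|) ^ ε)
  have hsum' : Summable fun j : ℤ ↦ ‖c (j + ⌊θ⌋)‖ * (1 + |((j + ⌊θ⌋ : ℤ) : ℝ)|) ^ ε :=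
    hS'.of_nonneg_of_le (fun _ ↦ by positivity) hbound
  have hsum : Summable fun k : ℤ ↦ ‖c k‖ * (1 + |(k : ℝ)|) ^ ε :=
    (Equiv.addRight ⌊θ⌋).summable_iff.mp hsum'
  refine ⟨c, hsum, ?_, fun y hy ↦ ?_⟩
  · rw [← (Equiv.addRight ⌊θ⌋).tsum_eq]
    calc ∑' j : ℤ, ‖c (j + ⌊θ⌋)‖ * (1 + |((j + ⌊θ⌋ : ℤ) : ℝ)|) ^ ε
        ≤ ∑' j : ℤ, 12 * 2 ^ ε * (1 + |θ|) ^ ε * (1 + |(j : ℝ)|) ^ (-(2 - ε)) :=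
          hsum'.tsum_le_tsum hbound hS'
      _ = 12 * 2 ^ ε * (∑' j : ℤ, (1 + |(j : ℝ)|) ^ (-(2 - ε))) * (1 + |θ|) ^ ε := by
          rw [tsum_mul_left]
          ring
      _ ≤ _ := by
          gcongr
          linarith
  · have hend : bumpExp θ 0 = bumpExp θ 1 := by simp [bumpExp]
    let F : C(AddCircle (1 : ℝ), ℂ) := ⟨AddCircle.liftIco 1 0 (bumpExp θ),
      AddCircle.liftIco_zero_continuous hend (continuous_bumpExp θ).continuousOn⟩
    have hF : fourierCoeff F = c := funext fun k ↦ fourierCoeff_liftIco_bumpExp θ k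
    have hcs : Summable (fourierCoeff F) := by
      rw [hF]
      refine Summable.of_norm (hsum.of_nonneg_of_le (fun _ ↦ norm_nonneg _) fun k ↦ ?_)
      exact le_mul_of_one_le_right (norm_nonneg _)
        (Real.one_le_rpow (by linarith [abs_nonneg (k : ℝ)]) hε.le)
    have := has_pointwise_sum_fourier_series_of_summable hcs (y : AddCircle (1 : ℝ))
    rw [hF] at this
    convert this using 1
    · funext k
      rw [fourier_coe_apply, smul_eq_mul, expTwoPi]
      push_cast
      ring_nf
    · exact (AddCircle.liftIco_zero_coe_apply hy).symm

/-- Replacing a character `e(k x)` by a modulated bump in the variable `x - α mod 1`. -/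
lemma exists_norm_sum_mul_bumpExp_le {ε : ℝ} (hε : 0 < ε) (hε' : ε ≤ 1 / 2) :
    ∃ C : ℝ, 0 < C ∧ ∀ (s : Finset ℕ) (a : ℕ → ℂ) (x : ℕ → ℝ) (B θ α : ℝ),
      (∀ k : ℤ, ‖∑ n ∈ s, a n * expTwoPi (k * x n)‖ ≤ B * (1 + |(k : ℝ)|) ^ ε) →
      ‖∑ n ∈ s, a n * bumpExp θ (Int.fract (x n - α))‖ ≤ C * B * (1 + |θ|) ^ ε := by
  obtain ⟨C, hC, h⟩ := exists_bumpExp_fourier_series hε hε'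
  refine ⟨C, hC, fun s a x B θ α hB ↦ ?_⟩
  obtain ⟨c, hsum, hle, hc⟩ := h θ
  have hB0 : 0 ≤ B := by simpa using (norm_nonneg _).trans (hB 0)
  have hS := hasSum_sum fun n (_ : n ∈ s) ↦
    (hc _ ⟨Int.fract_nonneg (x n - α), Int.fract_lt_one _⟩).mul_left (a n)
  have hterm (k : ℤ) : ‖∑ n ∈ s, a n * (c k * expTwoPi (k * Int.fract (x n - α)))‖ ≤
      B * (‖c k‖ * (1 + |(k : ℝ)|) ^ ε) := by
    have he (n : ℕ) : a n * (c k * expTwoPi (k * Int.fract (x n - α))) =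
        c k * expTwoPi (-k * α) * (a n * expTwoPi (k * x n)) := by
      have : expTwoPi (k * Int.fract (x n - α)) = expTwoPi (k * x n) * expTwoPi (-k * α) := by
        rw [← expTwoPi_add, ← mul_one (expTwoPi _), ← expTwoPi_intCast (k * ⌊x n - α⌋),
          ← expTwoPi_add, Int.fract]
        push_cast
        ring_nf
      rw [this]
      ring
    simp only [he, ← Finset.mul_sum]
    rw [norm_mul, norm_mul, norm_expTwoPi, mul_one, mul_left_comm]
    exact mul_le_mul_of_nonneg_left (hB k) (norm_nonneg _)
  calc _ ≤ ∑' k : ℤ, B * (‖c k‖ * (1 + |(k : ℝ)|) ^ ε) := by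
        rw [← hS.tsum_eq]
        exact tsum_of_norm_bounded (hsum.mul_left B).hasSum hterm
    _ ≤ B * (C * (1 + |θ|) ^ ε) := by
        rw [tsum_mul_left]
        exact mul_le_mul_of_nonneg_left hle hB0
    _ = _ := by ring

/-- A large sieve type bound: the points with `φ n = s₀`, weighted by `W`, are counted by the
exponential sums of `φ`, through the Fejér kernel. -/
lemma mul_card_le_of_exponential_sum_le {s A : Finset ℕ} (hA : A ⊆ s) {W φ : ℕ → ℝ} {s₀ δ M₀ M : ℝ}
    {K : ℕ} (hK : 0 < K) (hW : ∀ n ∈ s, 0 ≤ W n) (hWA : ∀ n ∈ A, δ ≤ W n)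
    (hφ : ∀ n ∈ A, φ n = s₀) (h₀ : ∑ n ∈ s, W n ≤ M₀) (hM : 0 ≤ M)
    (h : ∀ m : ℤ, m ≠ 0 → |m| < K → ‖∑ n ∈ s, (W n : ℂ) * expTwoPi (m * φ n)‖ ≤ M) :
    δ * #A * K ≤ M₀ + K * M := by
  have hnorm (x : ℝ) : ((‖∑ h ∈ range K, expTwoPi (h * x)‖ ^ 2 : ℝ) : ℂ) =
      ∑ a ∈ range K, ∑ b ∈ range K, expTwoPi ((a - b) * x) := by
    have hconj (y : ℝ) : (starRingEnd ℂ) (expTwoPi y) = expTwoPi (-y) := by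
      simp [expTwoPi, ← Complex.exp_conj, Complex.conj_ofNat]
    push_cast
    rw [← Complex.mul_conj', map_sum, Finset.sum_mul_sum]
    refine sum_congr rfl fun a _ ↦ sum_congr rfl fun b _ ↦ ?_
    rw [hconj, ← expTwoPi_add]
    ring_nf
  have hexp : ((∑ n ∈ s, W n * ‖∑ h ∈ range K, expTwoPi (h * (φ n - s₀))‖ ^ 2 : ℝ) : ℂ) =
      ∑ a ∈ range K, ∑ b ∈ range K, expTwoPi (-((a - b) * s₀)) *
        ∑ n ∈ s, (W n : ℂ) * expTwoPi (((a - b : ℤ) : ℝ) * φ n) := by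
    rw [Complex.ofReal_sum]
    simp only [Complex.ofReal_mul, hnorm, Finset.mul_sum]
    rw [sum_comm]
    refine sum_congr rfl fun a _ ↦ ?_
    rw [sum_comm]
    refine sum_congr rfl fun b _ ↦ sum_congr rfl fun n _ ↦ ?_
    rw [mul_left_comm, ← expTwoPi_add]
    push_cast
    ring_nf
  have hupper : ∑ n ∈ s, W n * ‖∑ h ∈ range K, expTwoPi (h * (φ n - s₀))‖ ^ 2 ≤
      K * (M₀ + K * M) := by
    have hterm : ∀ a ∈ range K, ∀ b ∈ range K, ‖expTwoPi (-((a - b) * s₀)) *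
        ∑ n ∈ s, (W n : ℂ) * expTwoPi (((a - b : ℤ) : ℝ) * φ n)‖ ≤
          (if a = b then M₀ else 0) + M := by
      intro a ha b hb
      rw [norm_mul, norm_expTwoPi, one_mul]
      split_ifs with hab
      · subst hab
        have h1 : expTwoPi 0 = 1 := by simp [expTwoPi]
        simp only [sub_self, Int.cast_zero, zero_mul, h1, mul_one]
        rw [← Complex.ofReal_sum, Complex.norm_real, Real.norm_eq_abs,
          abs_of_nonneg (sum_nonneg hW)]
        linarith
      · rw [zero_add]
        rw [mem_range] at ha hb
        exact h _ (by omega) (by rw [abs_lt]; omega)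
    calc _ ≤ ‖((∑ n ∈ s, W n * ‖∑ h ∈ range K, expTwoPi (h * (φ n - s₀))‖ ^ 2 : ℝ) : ℂ)‖ := by
          rw [Complex.norm_real]
          exact le_abs_self _
      _ ≤ ∑ a ∈ range K, ∑ b ∈ range K, ((if a = b then M₀ else 0) + M) := by
          rw [hexp]
          refine (norm_sum_le _ _).trans (sum_le_sum fun a ha ↦ ?_)
          exact (norm_sum_le _ _).trans (sum_le_sum fun b hb ↦ hterm a ha b hb)
      _ = K * (M₀ + K * M) := by
          rw [sum_congr rfl (g := fun _ ↦ M₀ + K * M)]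
          · simp only [sum_const, card_range, nsmul_eq_mul]
          · intro a ha
            rw [sum_add_distrib, sum_ite_eq, if_pos ha]
            simp
  have hlower : δ * #A * K ^ 2 ≤
      ∑ n ∈ s, W n * ‖∑ h ∈ range K, expTwoPi (h * (φ n - s₀))‖ ^ 2 := by
    calc δ * #A * K ^ 2 = ∑ n ∈ A, δ * K ^ 2 := by
          rw [sum_const, nsmul_eq_mul]
          ring
      _ ≤ ∑ n ∈ A, W n * ‖∑ h ∈ range K, expTwoPi (h * (φ n - s₀))‖ ^ 2 := by
          refine sum_le_sum fun n hn ↦ ?_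
          have h1 : expTwoPi 0 = 1 := by simp [expTwoPi]
          simp only [hφ n hn, sub_self, mul_zero, h1, sum_const, card_range, nsmul_eq_mul,
            mul_one, Complex.norm_natCast]
          exact mul_le_mul_of_nonneg_right (hWA n hn) (by positivity)
      _ ≤ _ := sum_le_sum_of_subset_of_nonneg hA fun n hn _ ↦
          mul_nonneg (hW n hn) (by positivity)
  have hK' : (0 : ℝ) < K := by exact_mod_cast hK
  nlinarith [hlower.trans hupper]

lemma exists_norm_sum_prod_bumpExp_le {d : ℕ} {ε : ℝ} (hε : 0 < ε) (hε' : ε ≤ 1 / 2) :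
    ∃ C : ℝ, 0 < C ∧ ∀ (s : Finset ℕ) (x : ℕ → Fin d → ℝ) (B : ℝ) (θ α : Fin d → ℝ)
      (i : Fin d) (h : ℤ),
      (∀ k : Fin d → ℤ, k i = h → ‖∑ n ∈ s, ∏ l, expTwoPi (k l * x n l)‖ ≤
        B * ∏ l, (1 + |(k l : ℝ)|) ^ ε) →
      ∀ J : Finset (Fin d), i ∉ J → ∀ k : Fin d → ℤ, k i = h →
        ‖∑ n ∈ s, ∏ l, (if l ∈ J then bumpExp (θ l) (Int.fract (x n l - α l))
          else expTwoPi (k l * x n l))‖ ≤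
        C ^ #J * B * ∏ l, (if l ∈ J then (1 + |θ l|) ^ ε else (1 + |(k l : ℝ)|) ^ ε) := by
  obtain ⟨C, hC, hstep⟩ := exists_norm_sum_mul_bumpExp_le hε hε'
  refine ⟨C, hC, fun s x B θ α i h hB J ↦ ?_⟩
  induction J using Finset.induction_on with
  | empty => simpa using hB
  | insert j J hj ih =>
    intro hi k hk
    rw [mem_insert, not_or] at hi
    let a : ℕ → ℂ := fun n ↦ ∏ l ∈ univ.erase j,
      (if l ∈ J then bumpExp (θ l) (Int.fract (x n l - α l)) else expTwoPi (k l * x n l))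
    let P : ℝ := ∏ l ∈ univ.erase j, (if l ∈ J then (1 + |θ l|) ^ ε else (1 + |(k l : ℝ)|) ^ ε)
    have hm (m : ℤ) : ‖∑ n ∈ s, a n * expTwoPi (m * x n j)‖ ≤
        C ^ #J * B * P * (1 + |(m : ℝ)|) ^ ε := by
      convert ih hi.2 (Function.update k j m) (by rwa [Function.update_of_ne hi.1]) using 1
      · congr 1
        refine sum_congr rfl fun n _ ↦ ?_
        rw [← Finset.prod_erase_mul _ _ (mem_univ j), if_neg hj, Function.update_self]
        congr 1
        refine prod_congr rfl fun l hl ↦ ?_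
        rw [Function.update_of_ne (ne_of_mem_erase hl)]
      · rw [← Finset.prod_erase_mul _ _ (mem_univ j), if_neg hj, Function.update_self, ← mul_assoc]
        congr 2
        refine prod_congr rfl fun l hl ↦ ?_
        rw [Function.update_of_ne (ne_of_mem_erase hl)]
    convert hstep s a (x · j) _ (θ j) (α j) hm using 1
    · congr 1
      refine sum_congr rfl fun n _ ↦ ?_
      rw [← Finset.prod_erase_mul _ _ (mem_univ j), if_pos (mem_insert_self j J)]
      congr 1
      refine prod_congr rfl fun l hl ↦ ?_
      simp only [mem_insert, ne_of_mem_erase hl, false_or]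
    · rw [← Finset.prod_erase_mul _ _ (mem_univ j), if_pos (mem_insert_self j J),
        card_insert_of_notMem hj, pow_succ]
      have : ∏ l ∈ univ.erase j,
          (if l ∈ insert j J then (1 + |θ l|) ^ ε else (1 + |(k l : ℝ)|) ^ ε) = P := by
        refine prod_congr rfl fun l hl ↦ ?_
        simp only [mem_insert, ne_of_mem_erase hl, false_or]
      rw [this]
      ring

lemma half_le_sin_pi_mul_sq {y : ℝ} (h₁ : 1 / 4 ≤ y) (h₂ : y ≤ 3 / 4) :
    1 / 2 ≤ Real.sin (Real.pi * y) ^ 2 := by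
  have h : Real.cos (2 * (Real.pi * y)) ≤ 0 :=
    Real.cos_nonpos_of_pi_div_two_le_of_le (by nlinarith [Real.pi_pos])
      (by nlinarith [Real.pi_pos])
  rw [Real.cos_two_mul] at h
  nlinarith [Real.sin_sq_add_cos_sq (Real.pi * y)]

/-- Incidences with one hyperplane, restricted to the points lying in a translate of the box
`[1/4, 3/4]^d`. -/
lemma exists_card_filter_box_le {d : ℕ} {ε : ℝ} (hε : 0 < ε) (hε' : ε ≤ 1 / 2) :
    ∃ C : ℝ, 0 < C ∧ ∀ (N : ℕ) (x : ℕ → Fin d → ℝ) (B : ℝ), 1 ≤ N → 0 ≤ B →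
      (∀ k : Fin d → ℤ, k ≠ 0 → ‖∑ n ∈ range N, ∏ l, expTwoPi (k l * x n l)‖ ≤
        B * ∏ l, (1 + |(k l : ℝ)|) ^ ε) →
      ∀ (y : Fin d → ℝ) (t : ℝ) (α : Fin d → ℝ) (i : Fin d), 0 < y i →
        (∀ l, 0 ≤ y l) → (∀ l, y l ≤ y i) → ∀ A ⊆ range N, (∀ n ∈ A, dotP (x n) y = t) →
        (∀ n ∈ A, ∀ l, 1 / 4 ≤ x n l - α l ∧ x n l - α l ≤ 3 / 4) →
        (#A : ℝ) ≤ C * (1 + B * (N : ℝ) ^ (d * ε)) := by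
  obtain ⟨C, hC, hsum⟩ := exists_norm_sum_prod_bumpExp_le (d := d) hε hε'
  refine ⟨2 ^ d * (1 + C ^ (d - 1)), by positivity, ?_⟩
  intro N x B hN hB hx y t α i hyi hy0 hyle A hAN hAt hAα
  have hN' : (0 : ℝ) < N := by exact_mod_cast hN
  let J : Finset (Fin d) := univ.erase i
  let z : ℕ → Fin d → ℝ := fun n l ↦ Int.fract (x n l - α l)
  let r : Fin d → ℝ := fun l ↦ y l / y i
  let W : ℕ → ℝ := fun n ↦ ∏ l ∈ J, Real.sin (Real.pi * z n l) ^ 2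
  let φ : ℕ → ℝ := fun n ↦ x n i + ∑ l ∈ J, r l * z n l
  have hr (l : Fin d) : |r l| ≤ 1 := by
    rw [abs_of_nonneg (div_nonneg (hy0 l) hyi.le)]
    exact (div_le_one hyi).mpr (hyle l)
  have hW0 (n : ℕ) : 0 ≤ W n := prod_nonneg fun _ _ ↦ sq_nonneg _
  have hW1 (n : ℕ) : W n ≤ 1 := prod_le_one (fun _ _ ↦ sq_nonneg _) fun _ _ ↦ Real.sin_sq_le_one _
  have hzA {n : ℕ} (hn : n ∈ A) (l : Fin d) : z n l = x n l - α l := by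
    rw [Int.fract_eq_self]
    constructor <;> linarith [hAα n hn l]
  have hcardJ : #J = d - 1 := by simp [J]
  have hWA : ∀ n ∈ A, (1 / 2 : ℝ) ^ d ≤ W n := by
    intro n hn
    calc (1 / 2 : ℝ) ^ d ≤ (1 / 2) ^ #J := by
          refine pow_le_pow_of_le_one (by norm_num) (by norm_num) ?_
          omega
      _ = ∏ l ∈ J, (1 / 2 : ℝ) := by simp
      _ ≤ W n := by
          refine prod_le_prod (fun _ _ ↦ by norm_num) fun l _ ↦ ?_
          rw [hzA hn]
          exact half_le_sin_pi_mul_sq (hAα n hn l).1 (hAα n hn l).2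
  have hφA : ∀ n ∈ A, φ n = t / y i - ∑ l ∈ J, r l * α l := by
    intro n hn
    have h1 := hAt n hn
    rw [dotP, ← Finset.add_sum_erase _ _ (mem_univ i)] at h1
    have h2 : ∑ l ∈ J, r l * z n l = (∑ l ∈ J, x n l * y l) / y i - ∑ l ∈ J, r l * α l := by
      rw [Finset.sum_div, ← Finset.sum_sub_distrib]
      refine sum_congr rfl fun l _ ↦ ?_
      rw [hzA hn]
      ring
    simp only [φ, h2, ← h1, J]
    field_simp
    ring
  have hexp : ∀ m : ℤ, m ≠ 0 → |m| < (N : ℤ) →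
      ‖∑ n ∈ range N, (W n : ℂ) * expTwoPi (m * φ n)‖ ≤
        C ^ (d - 1) * B * (N : ℝ) ^ (d * ε) := by
    intro m hm hmN
    have hmN' : 1 + |(m : ℝ)| ≤ N := by
      have : 1 + |m| ≤ (N : ℤ) := by omega
      exact_mod_cast this
    have key := hsum (range N) x B (fun l ↦ m * r l) α i m (fun k hk ↦ hx k fun h0 ↦ hm ?_)
      J (notMem_erase i _) (fun _ ↦ m) rfl
    · have hprod (n : ℕ) : (W n : ℂ) * expTwoPi (m * φ n) =
          ∏ l, (if l ∈ J then bumpExp (m * r l) (Int.fract (x n l - α l))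
            else expTwoPi (m * x n l)) := by
        rw [← Finset.mul_prod_erase _ _ (mem_univ i), if_neg (notMem_erase i _),
          prod_congr rfl (g := fun l ↦ bumpExp (m * r l) (z n l)) fun l hl ↦ if_pos hl]
        simp only [bumpExp, prod_mul_distrib, W, φ, mul_add, expTwoPi_add, Finset.mul_sum,
          expTwoPi_sum, J]
        push_cast
        simp only [mul_assoc]
        ring
      simp only [hprod]
      refine key.trans ?_
      rw [hcardJ]
      refine mul_le_mul_of_nonneg_left ?_ (by positivity)
      calc _ ≤ ∏ _l : Fin d, (N : ℝ) ^ ε := by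
            refine prod_le_prod (fun l _ ↦ by split_ifs <;> positivity) fun l _ ↦ ?_
            split_ifs
            · refine Real.rpow_le_rpow (by positivity) (le_trans ?_ hmN') hε.le
              rw [abs_mul]
              nlinarith [hr l, abs_nonneg (m : ℝ)]
            · exact Real.rpow_le_rpow (by positivity) hmN' hε.le
        _ = _ := by
            rw [prod_const, card_univ, Fintype.card_fin, ← Real.rpow_natCast,
              ← Real.rpow_mul hN'.le, mul_comm ε]
    · rw [← hk, h0, Pi.zero_apply]
  have hmain := mul_card_le_of_exponential_sum_le hAN hN (fun n _ ↦ hW0 n) hWA hφA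
    (M₀ := N) ((sum_le_sum fun n _ ↦ hW1 n).trans (by simp)) (by positivity) hexp
  have h1 : (1 / 2 : ℝ) ^ d * #A ≤ 1 + C ^ (d - 1) * B * (N : ℝ) ^ (d * ε) := by
    nlinarith
  have h2 : (#A : ℝ) ≤ 2 ^ d * (1 + C ^ (d - 1) * B * (N : ℝ) ^ (d * ε)) := by
    calc (#A : ℝ) = 2 ^ d * ((1 / 2 : ℝ) ^ d * #A) := by
          rw [← mul_assoc, ← mul_pow]
          norm_num
      _ ≤ _ := by gcongr
  refine h2.trans ?_
  rw [mul_assoc (2 ^ d : ℝ)]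
  refine mul_le_mul_of_nonneg_left ?_ (by positivity)
  have h3 : 0 ≤ B * (N : ℝ) ^ (d * ε) := by positivity
  have h4 : 0 ≤ C ^ (d - 1) := by positivity
  nlinarith

lemma intNorm_le_prod {d : ℕ} (k : Fin d → ℤ) : intNorm k ≤ ∏ l, (1 + |(k l : ℝ)|) := by
  rw [intNorm, Real.sqrt_le_left (prod_nonneg fun _ _ ↦ by positivity)]
  have h (s : Finset (Fin d)) :
      1 + ∑ l ∈ s, (k l : ℝ) ^ 2 ≤ (∏ l ∈ s, (1 + |(k l : ℝ)|)) ^ 2 := by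
    induction s using Finset.induction_on with
    | empty => simp
    | insert a s ha ih =>
      rw [sum_insert ha, prod_insert ha, mul_pow]
      have h1 : 0 ≤ ∑ l ∈ s, (k l : ℝ) ^ 2 := sum_nonneg fun _ _ ↦ sq_nonneg _
      have h2 : 1 + (k a : ℝ) ^ 2 ≤ (1 + |(k a : ℝ)|) ^ 2 := by
        nlinarith [sq_abs (k a : ℝ), abs_nonneg (k a : ℝ)]
      nlinarith [mul_le_mul h2 ih (by positivity) (by positivity),
        mul_nonneg (sq_nonneg (k a : ℝ)) h1]
  linarith [h univ]

/-- The exponential sums of a uniformly distributed sequence, in terms of `expTwoPi`. -/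
lemma IsGammaUD.exists_norm_sum_prod_le {d : ℕ} {γ : ℝ} {v : ℕ → Fin d → ℝ} (hv : IsGammaUD γ v)
    {ε : ℝ} (hε : 0 < ε) :
    ∃ C : ℝ, 0 < C ∧ ∀ N : ℕ, 1 ≤ N → ∀ k : Fin d → ℤ, k ≠ 0 →
      ‖∑ n ∈ range N, ∏ l, expTwoPi (k l * v n l)‖ ≤
        C * (N : ℝ) ^ (1 - γ) * ∏ l, (1 + |(k l : ℝ)|) ^ ε := by
  obtain ⟨C, hC, h⟩ := hv ε hε
  refine ⟨C, hC, fun N hN k hk ↦ ?_⟩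
  have hN' : (0 : ℝ) < N := by exact_mod_cast hN
  have h1 := h k hk N hN
  rw [norm_mul, norm_inv, Complex.norm_natCast, inv_mul_le_iff₀ hN'] at h1
  have h2 : intNorm k ^ ε ≤ ∏ l, (1 + |(k l : ℝ)|) ^ ε := by
    rw [Real.finsetProd_rpow _ _ fun _ _ ↦ by positivity]
    exact Real.rpow_le_rpow (Real.sqrt_nonneg _) (intNorm_le_prod k) hε.le
  simp only [← expTwoPi_sum]
  calc _ ≤ N * (C * intNorm k ^ ε * (N : ℝ) ^ (-γ)) := h1
    _ = C * (N : ℝ) ^ (1 - γ) * intNorm k ^ ε := by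
        rw [sub_eq_add_neg, Real.rpow_add hN', Real.rpow_one]
        ring
    _ ≤ _ := by gcongr

open scoped Classical in
/-- Incidences with one hyperplane: the number of points of a `1/2`-uniformly distributed
sequence on it is `O(N ^ (1/2 + ε))`, uniformly in the hyperplane. -/
lemma IsGammaUD.exists_card_filter_dotP_eq_le {d : ℕ} (hd : 0 < d) {v : ℕ → Fin d → ℝ}
    (hv : ∀ n, v n ∈ Set.Icc (0 : Fin d → ℝ) 1) (hUD : IsGammaUD (1 / 2) v) {t : ℝ} (ht : t ≠ 0)
    {ε : ℝ} (hε : 0 < ε) :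
    ∃ C : ℝ, 0 < C ∧ ∀ N : ℕ, 1 ≤ N → ∀ y ∈ Set.Icc (0 : Fin d → ℝ) 1,
      (#{n ∈ range N | dotP (v n) y = t} : ℝ) ≤ C * (N : ℝ) ^ (1 / 2 + ε) := by
  have hd' : (0 : ℝ) < d := by exact_mod_cast hd
  let η : ℝ := min (1 / 2) (ε / d)
  have hη : 0 < η := lt_min (by norm_num) (by positivity)
  have hdη : d * η ≤ ε := by
    calc d * η ≤ d * (ε / d) := by gcongr; exact min_le_right _ _
      _ = ε := by field_simp
  obtain ⟨C₁, hC₁, h₁⟩ := hUD.exists_norm_sum_prod_le hη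
  obtain ⟨C₂, hC₂, h₂⟩ := exists_card_filter_box_le (d := d) hη (min_le_left _ _)
  refine ⟨2 ^ d * (C₂ * (1 + C₁)), by positivity, fun N hN y hy ↦ ?_⟩
  have hN' : (1 : ℝ) ≤ N := by exact_mod_cast hN
  have hpow : 1 ≤ (N : ℝ) ^ (1 / 2 + ε) := Real.one_le_rpow hN' (by positivity)
  by_cases hy0 : y = 0
  · have : {n ∈ range N | dotP (v n) y = t} = ∅ := by
      refine filter_eq_empty_iff.mpr fun n _ h ↦ ht ?_
      simp [← h, hy0, dotP]
    rw [this, card_empty, Nat.cast_zero]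
    positivity
  obtain ⟨i, -, hi⟩ := exists_max_image univ y ⟨⟨0, hd⟩, mem_univ _⟩
  have hyi : 0 < y i := by
    by_contra! h
    exact hy0 (funext fun l ↦ le_antisymm ((hi l (mem_univ l)).trans h) (hy.1 l))
  let α : (Fin d → Bool) → Fin d → ℝ := fun σ l ↦ if σ l then 1 / 4 else -1 / 4
  let A : (Fin d → Bool) → Finset ℕ := fun σ ↦
    {n ∈ range N | dotP (v n) y = t ∧ ∀ l, 1 / 4 ≤ v n l - α σ l ∧ v n l - α σ l ≤ 3 / 4}
  have hA (σ : Fin d → Bool) : (#(A σ) : ℝ) ≤ C₂ * (1 + C₁) * (N : ℝ) ^ (1 / 2 + ε) := by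
    have h := h₂ N v (C₁ * (N : ℝ) ^ (1 - 1 / 2 : ℝ)) hN (by positivity) (h₁ N hN) y t (α σ) i
      hyi (fun l ↦ hy.1 l) (fun l ↦ hi l (mem_univ l)) (A σ) (filter_subset _ _)
      (fun n hn ↦ (mem_filter.mp hn).2.1) fun n hn ↦ (mem_filter.mp hn).2.2
    have hexp : (N : ℝ) ^ (1 - 1 / 2 : ℝ) * (N : ℝ) ^ (d * η) ≤ (N : ℝ) ^ (1 / 2 + ε) := by
      rw [← Real.rpow_add (by positivity)]
      exact Real.rpow_le_rpow_of_exponent_le hN' (by linarith)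
    refine h.trans ?_
    rw [mul_assoc C₁, mul_assoc C₂]
    refine mul_le_mul_of_nonneg_left ?_ hC₂.le
    nlinarith
  have hcover : {n ∈ range N | dotP (v n) y = t} ⊆ univ.biUnion A := by
    intro n hn
    rw [mem_filter] at hn
    rw [mem_biUnion]
    refine ⟨fun l ↦ decide (1 / 2 ≤ v n l), mem_univ _, mem_filter.mpr ⟨hn.1, hn.2, fun l ↦ ?_⟩⟩
    have h0 : 0 ≤ v n l := (hv n).1 l
    have h1 : v n l ≤ 1 := (hv n).2 l
    by_cases h : 1 / 2 ≤ v n l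
    · simp only [α, h, decide_true, if_true]
      constructor <;> linarith
    · simp only [α, h, decide_false, Bool.false_eq_true, if_false]
      constructor <;> linarith
  calc (#{n ∈ range N | dotP (v n) y = t} : ℝ) ≤ ∑ σ, (#(A σ) : ℝ) := by
        exact_mod_cast (card_le_card hcover).trans card_biUnion_le
    _ ≤ ∑ _σ : Fin d → Bool, C₂ * (1 + C₁) * (N : ℝ) ^ (1 / 2 + ε) := sum_le_sum fun σ _ ↦ hA σ
    _ = _ := by
        simp only [sum_const, card_univ, Fintype.card_fun, Fintype.card_bool, Fintype.card_fin,
          nsmul_eq_mul]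
        push_cast
        ring

open scoped Classical in
/-- For `1/2`-uniformly distributed sequences `{v_n}`, `{w_m}` in `[0,1]^d`, `d ≥ 2`,
and a fixed `1/100 ≤ t < d`, the number of pairs with `v_n · w_m = t` is at most
`C_ε N^{3/2 + ε}`. -/
theorem stmt12 (d : ℕ) (hd : 2 ≤ d)
    (v w : ℕ → Fin d → ℝ)
    (hv : ∀ n, v n ∈ Set.Icc (0 : Fin d → ℝ) 1) (hw : ∀ m, w m ∈ Set.Icc (0 : Fin d → ℝ) 1)
    (hUDv : IsGammaUD (1/2) v) (hUDw : IsGammaUD (1/2) w)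
    (t : ℝ) (ht : 1/100 ≤ t) (ht2 : t < d) :
    ∀ ε : ℝ, 0 < ε → ∃ C : ℝ, 0 < C ∧ ∀ N : ℕ, 1 ≤ N →
      ((((Finset.range N) ×ˢ (Finset.range N)).filter
          (fun p => dotP (v p.1) (w p.2) = t)).card : ℝ)
        ≤ C * (N : ℝ) ^ ((3:ℝ)/2 + ε) := by
  intro ε hε
  obtain ⟨C, hC, h⟩ := hUDv.exists_card_filter_dotP_eq_le (by omega) hv
    (t := t) (by linarith : 0 < t).ne' hε
  refine ⟨C, hC, fun N hN ↦ ?_⟩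
  have hN' : (0 : ℝ) < N := by exact_mod_cast hN
  rw [card_filter, sum_product_right]
  simp only [← card_filter]
  push_cast
  calc ∑ m ∈ range N, (#{n ∈ range N | dotP (v n) (w m) = t} : ℝ)
      ≤ ∑ _m ∈ range N, C * (N : ℝ) ^ (1 / 2 + ε) := sum_le_sum fun m _ ↦ h N hN _ (hw m)
    _ = C * (N : ℝ) ^ ((3 : ℝ) / 2 + ε) := by
        rw [sum_const, card_range, nsmul_eq_mul, show (3 : ℝ) / 2 + ε = 1 + (1 / 2 + ε) by ring,
          Real.rpow_add hN' 1, Real.rpow_one]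
        ring
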